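/- arXiv:2012.10313 — 4 statements merged into one kernel-verified Lean document; each statement's English description precedes it below -/
import Mathlib

section
/- Let (S, stepS) and (T, stepT) be two transition systems, let ~ : S → T → Prop be a relation, and let ≺ be a well-founded relation on S such that the measured step diagram holds: whenever σ1 ~ ς1 and stepS σ1 σ2, either there exists ς2 with stepT+ ς1 ς2 and σ2 ~ ς2, or else σ2 ~ ς1 and σ2 ≺ σ1. Then the simulation preserves divergence: if σ ~ ς and σ diverges in the source system, then ς diverges in the target system. -/
/-- A state diverges: there is an infinite run starting at `s`. -/
def Diverges {S : Type*} (step : S → S → Prop) (s : S) : Prop :=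
  ∃ f : ℕ → S, f 0 = s ∧ ∀ n, step (f n) (f (n + 1))

/-!
Divergence is non-accessibility for the reversed step relation, so it suffices to pull accessibility
back from the target to the source. This is a lexicographic induction: first on the target state for
`stepT⁺`, whose reverse has the same accessible states as that of `stepT`, then on the source state
for `lt`, which handles the stuttering steps.
-/

open Function (swap)
open Relation (TransGen)

theorem diverges_iff_not_acc {S : Type*} {step : S → S → Prop} {s : S} :
    Diverges step s ↔ ¬Acc (swap step) s :=
  (not_acc_iff_exists_descending_chain (r := swap step)).symm

theorem diverges_transGen_iff {S : Type*} {step : S → S → Prop} {s : S} :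
    Diverges (TransGen step) s ↔ Diverges step s := by
  have swap_transGen : swap (TransGen step) = TransGen (swap step) := by
    ext
    exact Relation.transGen_swap.symm
  rw [diverges_iff_not_acc, diverges_iff_not_acc, swap_transGen, acc_transGen_iff]

theorem acc_of_measured_simulation {S T : Type*} {stepS : S → S → Prop} {stepT : T → T → Prop}
    {sim : S → T → Prop} {lt : S → S → Prop} (hwf : WellFounded lt)
    (hdiag : ∀ σ₁ ς₁ σ₂, sim σ₁ ς₁ → stepS σ₁ σ₂ →
      (∃ ς₂, stepT ς₁ ς₂ ∧ sim σ₂ ς₂) ∨ (sim σ₂ ς₁ ∧ lt σ₂ σ₁))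
    {σ : S} {ς : T} (hς : Acc (swap stepT) ς) (hsim : sim σ ς) : Acc (swap stepS) σ := by
  induction hς generalizing σ with
  | intro ς _ ih_target =>
    induction σ using hwf.induction with
    | _ σ ih_source =>
      refine Acc.intro σ fun σ' hstep => ?_
      rcases hdiag σ ς σ' hsim hstep with ⟨ς', hstep', hsim'⟩ | ⟨hsim', hlt⟩
      · exact ih_target ς' hstep' hsim'
      · exact ih_source σ' hlt hsim'

/-- a measured forward simulation preserves divergence. -/
theorem measured_simulation_preserves_divergence {S T : Type*}
    (stepS : S → S → Prop) (stepT : T → T → Prop)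
    (sim : S → T → Prop) (lt : S → S → Prop) (hwf : WellFounded lt)
    (hdiag : ∀ σ1 ς1 σ2, sim σ1 ς1 → stepS σ1 σ2 →
      (∃ ς2, Relation.TransGen stepT ς1 ς2 ∧ sim σ2 ς2) ∨
      (sim σ2 ς1 ∧ lt σ2 σ1)) :
    ∀ σ ς, sim σ ς → Diverges stepS σ → Diverges stepT ς := by
  intro σ ς hsim hσ
  rw [diverges_iff_not_acc] at hσ
  rw [← diverges_transGen_iff, diverges_iff_not_acc]
  exact fun hς => hσ (acc_of_measured_simulation hwf hdiag hς hsim)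
end

section
/- Let (S, stepS, finalS) be a source transition system and (T, stepT, finalT) a deterministic target transition system over the same result type R (deterministic: stepT ς ς1 and stepT ς ς2 imply ς1 = ς2; finalT ς r implies ς is stuck; finalT ς r1 and finalT ς r2 imply r1 = r2). Let ~ : S → T → Prop and a well-founded relation ≺ on S form a measured forward simulation: whenever σ1 ~ ς1 and stepS σ1 σ2, either there exists ς2 with stepT+ ς1 ς2 and σ2 ~ ς2, or σ2 ~ ς1 and σ2 ≺ σ1; and whenever σ ~ ς and finalS σ r, there exists ς' with stepT* ς ς' and finalT ς' r. Suppose σ0 ~ ς0 and σ0 is safe. Then (classically) if ς0 terminates with result r in the target system, σ0 terminates with result r in the source system. -/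
def Stuck {S : Type*} (step : S → S → Prop) (s : S) : Prop :=
  ¬ ∃ s', step s s'

def Terminates {S R : Type*} (step : S → S → Prop) (final : S → R → Prop)
    (s : S) (r : R) : Prop :=
  ∃ s', Relation.ReflTransGen step s s' ∧ final s' r

def GoesWrong {S R : Type*} (step : S → S → Prop) (final : S → R → Prop)
    (s : S) : Prop :=
  ∃ s', Relation.ReflTransGen step s s' ∧ Stuck step s' ∧ ¬ ∃ r, final s' r

def Safe {S R : Type*} (step : S → S → Prop) (final : S → R → Prop)
    (s : S) : Prop :=
  ∀ s', Relation.ReflTransGen step s s' → (∃ s'', step s' s'') ∨ ∃ r, final s' r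

/-! Well-foundedness of the measure makes a source state strongly normalizing as soon as a related
target state is: a lexicographic descent, first along the target run, then along the measure while
the target stutters. In a deterministic target a terminating state is strongly normalizing, so the
source state is too, and by safety its run ends in a final state with some result `r'`. Forward
simulation carries `r'` over to the target, where results are unique. -/

open Relation Function

section TransitionSystem

variable {S R : Type*} {step : S → S → Prop} {final : S → R → Prop}

theorem Stuck.eq_of_reflTransGen {s s' : S} (hs : Stuck step s) (h : ReflTransGen step s s') :
    s' = s :=
  (reflTransGen_iff_eq fun _ hstep => hs ⟨_, hstep⟩).1 h

theorem Stuck.acc {s : S} (hs : Stuck step s) : Acc (swap step) s :=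
  .intro s fun s' hstep => absurd ⟨s', hstep⟩ hs

theorem acc_swap_of_reflTransGen (hdet : Relator.RightUnique step) {s s' : S}
    (h : ReflTransGen step s s') (hacc : Acc (swap step) s') : Acc (swap step) s := by
  induction h using ReflTransGen.head_induction_on with
  | refl => exact hacc
  | head hstep _ ih => exact .intro _ fun u hu => hdet hstep hu ▸ ih

theorem exists_reflTransGen_stuck_of_acc {s : S} (hacc : Acc (swap step) s) :
    ∃ s', ReflTransGen step s s' ∧ Stuck step s' := by
  induction hacc with
  | intro s _ ih =>
    by_cases hs : Stuck step s
    · exact ⟨s, .refl, hs⟩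
    · obtain ⟨u, hu⟩ := not_not.1 hs
      obtain ⟨s', hus', hs'⟩ := ih u hu
      exact ⟨s', .head hu hus', hs'⟩

theorem Safe.exists_terminates_of_acc {s : S} (hsafe : Safe step final s)
    (hacc : Acc (swap step) s) : ∃ r, Terminates step final s r := by
  obtain ⟨s', hss', hstuck⟩ := exists_reflTransGen_stuck_of_acc hacc
  obtain ⟨r, hr⟩ := (hsafe s' hss').resolve_left hstuck
  exact ⟨r, s', hss', hr⟩

theorem Terminates.acc (hdet : Relator.RightUnique step)
    (hstuck : ∀ s r, final s r → Stuck step s) {s : S} {r : R}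
    (h : Terminates step final s r) : Acc (swap step) s := by
  obtain ⟨s', hss', hr⟩ := h
  exact acc_swap_of_reflTransGen hdet hss' (hstuck s' r hr).acc

theorem Terminates.result_unique (hdet : Relator.RightUnique step)
    (hstuck : ∀ s r, final s r → Stuck step s) (hfinal : Relator.RightUnique final)
    {s : S} {r₁ r₂ : R} (h₁ : Terminates step final s r₁) (h₂ : Terminates step final s r₂) :
    r₁ = r₂ := by
  obtain ⟨s₁, hs₁, hr₁⟩ := h₁
  obtain ⟨s₂, hs₂, hr₂⟩ := h₂
  have hs : s₂ = s₁ := by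
    rcases ReflTransGen.total_of_right_unique hdet hs₁ hs₂ with h | h
    · exact (hstuck s₁ r₁ hr₁).eq_of_reflTransGen h
    · exact ((hstuck s₂ r₂ hr₂).eq_of_reflTransGen h).symm
  exact hfinal hr₁ (hs ▸ hr₂)

end TransitionSystem

section Simulation

variable {S T R : Type*}

/-- Forward simulation in which each source step is matched by zero or more target steps; it
transports terminating runs but does not rule out infinite stuttering. -/
def IsStarSimulation (stepS : S → S → Prop) (stepT : T → T → Prop) (sim : S → T → Prop) : Prop :=
  ∀ σ₁ ς₁ σ₂, sim σ₁ ς₁ → stepS σ₁ σ₂ → ∃ ς₂, ReflTransGen stepT ς₁ ς₂ ∧ sim σ₂ ς₂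

/-- The step condition of a measured forward simulation: the target may stutter only if the source
state decreases for `lt`. Well-foundedness of `lt` and the condition on final states are kept as
separate hypotheses. -/
def IsMeasuredSimulation (stepS : S → S → Prop) (stepT : T → T → Prop) (sim : S → T → Prop)
    (lt : S → S → Prop) : Prop :=
  ∀ σ₁ ς₁ σ₂, sim σ₁ ς₁ → stepS σ₁ σ₂ →
    (∃ ς₂, TransGen stepT ς₁ ς₂ ∧ sim σ₂ ς₂) ∨ (sim σ₂ ς₁ ∧ lt σ₂ σ₁)

variable {stepS : S → S → Prop} {finalS : S → R → Prop} {stepT : T → T → Prop}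
  {finalT : T → R → Prop} {sim : S → T → Prop} {lt : S → S → Prop}

theorem IsStarSimulation.exists_reflTransGen (h : IsStarSimulation stepS stepT sim) {σ σ' : S}
    {ς : T} (hsim : sim σ ς) (hσ : ReflTransGen stepS σ σ') :
    ∃ ς', ReflTransGen stepT ς ς' ∧ sim σ' ς' := by
  induction hσ with
  | refl => exact ⟨ς, .refl, hsim⟩
  | tail _ hstep ih =>
    obtain ⟨ς₁, hς₁, hsim₁⟩ := ih
    obtain ⟨ς₂, hς₂, hsim₂⟩ := h _ ς₁ _ hsim₁ hstep
    exact ⟨ς₂, hς₁.trans hς₂, hsim₂⟩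

theorem IsStarSimulation.terminates (h : IsStarSimulation stepS stepT sim)
    (hfinal : ∀ σ ς r, sim σ ς → finalS σ r → Terminates stepT finalT ς r) {σ : S} {ς : T}
    {r : R} (hsim : sim σ ς) (hσ : Terminates stepS finalS σ r) :
    Terminates stepT finalT ς r := by
  obtain ⟨σ', hσσ', hr⟩ := hσ
  obtain ⟨ς₁, hς₁, hsim₁⟩ := h.exists_reflTransGen hsim hσσ'
  obtain ⟨ς₂, hς₂, hr₂⟩ := hfinal σ' ς₁ r hsim₁ hr
  exact ⟨ς₂, hς₁.trans hς₂, hr₂⟩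

theorem IsMeasuredSimulation.isStarSimulation (h : IsMeasuredSimulation stepS stepT sim lt) :
    IsStarSimulation stepS stepT sim := by
  intro σ₁ ς₁ σ₂ hsim hstep
  rcases h σ₁ ς₁ σ₂ hsim hstep with ⟨ς₂, hς₂, hsim₂⟩ | ⟨hsim₂, _⟩
  · exact ⟨ς₂, hς₂.to_reflTransGen, hsim₂⟩
  · exact ⟨ς₁, .refl, hsim₂⟩

theorem IsMeasuredSimulation.acc (h : IsMeasuredSimulation stepS stepT sim lt)
    (hwf : WellFounded lt) {σ : S} {ς : T} (hsim : sim σ ς) (hς : Acc (swap stepT) ς) :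
    Acc (swap stepS) σ := by
  -- A single source step may be matched by several target steps, hence the transitive closure.
  replace hς : Acc (TransGen (swap stepT)) ς := hς.transGen
  induction hς generalizing σ with
  | intro ς _ ih_progress =>
    induction σ using hwf.induction with
    | _ σ ih_stutter =>
      refine .intro σ fun σ' hstep => ?_
      rcases h σ ς σ' hsim hstep with ⟨ς', hς', hsim'⟩ | ⟨hsim', hlt⟩
      · exact ih_progress ς' (transGen_swap.2 hς') hsim'
      · exact ih_stutter σ' hlt hsim'

end Simulation

/-- backward preservation of termination for measured forward
simulations into a deterministic target. -/
theorem backward_termination {S T R : Type*}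
    (stepS : S → S → Prop) (finalS : S → R → Prop)
    (stepT : T → T → Prop) (finalT : T → R → Prop)
    (hdetT : ∀ ς ς1 ς2, stepT ς ς1 → stepT ς ς2 → ς1 = ς2)
    (hfinalStuckT : ∀ ς r, finalT ς r → Stuck stepT ς)
    (hfinalDetT : ∀ ς r1 r2, finalT ς r1 → finalT ς r2 → r1 = r2)
    (sim : S → T → Prop) (lt : S → S → Prop) (hwf : WellFounded lt)
    (hstep : ∀ σ1 ς1 σ2, sim σ1 ς1 → stepS σ1 σ2 →
      (∃ ς2, Relation.TransGen stepT ς1 ς2 ∧ sim σ2 ς2) ∨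
      (sim σ2 ς1 ∧ lt σ2 σ1))
    (hfinal : ∀ σ ς r, sim σ ς → finalS σ r →
      ∃ ς', Relation.ReflTransGen stepT ς ς' ∧ finalT ς' r)
    (σ0 : S) (ς0 : T) (hsim : sim σ0 ς0) (hsafe : Safe stepS finalS σ0) :
    ∀ r, Terminates stepT finalT ς0 r → Terminates stepS finalS σ0 r := by
  intro r hr
  have hmeasured : IsMeasuredSimulation stepS stepT sim lt := hstep
  have hacc : Acc (swap stepS) σ0 := hmeasured.acc hwf hsim (hr.acc hdetT hfinalStuckT)
  obtain ⟨r', hr'⟩ := hsafe.exists_terminates_of_acc hacc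
  have hr'T : Terminates stepT finalT ς0 r' := hmeasured.isStarSimulation.terminates hfinal hsim hr'
  have heq : r' = r := hr'T.result_unique hdetT hfinalStuckT hfinalDetT hr
  exact heq ▸ hr'
end

section
/- Let (S, stepS, finalS) be a source transition system and (T, stepT, finalT) a deterministic target transition system over the same result type R (deterministic: stepT ς ς1 and stepT ς ς2 imply ς1 = ς2; finalT ς r implies ς is stuck; finalT ς r1 and finalT ς r2 imply r1 = r2). Let ~ : S → T → Prop and a well-founded relation ≺ on S form a measured forward simulation: whenever σ1 ~ ς1 and stepS σ1 σ2, either there exists ς2 with stepT+ ς1 ς2 and σ2 ~ ς2, or σ2 ~ ς1 and σ2 ≺ σ1; and whenever σ ~ ς and finalS σ r, there exists ς' with stepT* ς ς' and finalT ς' r. Suppose σ0 ~ ς0 and σ0 is safe. Then (classically, using dependent choice) ς0 is safe, i.e. the target state does not go wrong. -/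
/-!
Call a target state tracked if it is final or related to a safe source state. The source can
stutter only finitely often, so by well-founded induction a tracked state is final or reaches
another tracked state in at least one step. The target is deterministic, so its run from a tracked
state passes through tracked states as long as it has not met a final one, and it cannot get stuck
between two of them.
-/

section Progress

variable {S R : Type*} {step : S → S → Prop} {final : S → R → Prop}

theorem Safe.of_step {s s' : S} (hs : Safe step final s) (h : step s s') : Safe step final s' :=
  fun _ h' => hs _ (.head h h')

theorem Safe.exists_step_or_final {s : S} (hs : Safe step final s) :
    (∃ s', step s s') ∨ ∃ r, final s r :=
  hs s .refl

theorem reflTransGen_of_step_of_transGen (hdet : Relator.RightUnique step) {s t u : S}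
    (hst : step s t) (hsu : Relation.TransGen step s u) : Relation.ReflTransGen step t u := by
  obtain ⟨t', hst', ht'u⟩ := Relation.TransGen.head'_iff.mp hsu
  exact hdet hst' hst ▸ ht'u

theorem safe_of_forall_final_or_transGen (hdet : Relator.RightUnique step)
    (hstuck : ∀ s r, final s r → Stuck step s) {P : S → Prop}
    (hP : ∀ s, P s → (∃ r, final s r) ∨ ∃ u, Relation.TransGen step s u ∧ P u)
    {s : S} (hs : P s) : Safe step final s := by
  intro t hst
  have hprogress : (∃ r, final t r) ∨ ∃ u, Relation.TransGen step t u ∧ P u := by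
    induction hst with
    | refl => exact hP s hs
    | tail _ hstep ih =>
      rcases ih with ⟨r, hr⟩ | ⟨u, hu, hPu⟩
      · exact absurd ⟨_, hstep⟩ (hstuck _ r hr)
      · rcases Relation.reflTransGen_iff_eq_or_transGen.mp
          (reflTransGen_of_step_of_transGen hdet hstep hu) with rfl | hu'
        · exact hP _ hPu
        · exact .inr ⟨u, hu', hPu⟩
  rcases hprogress with hr | ⟨u, hu, _⟩
  · exact .inr hr
  · obtain ⟨t', ht', _⟩ := Relation.TransGen.head'_iff.mp hu
    exact .inl ⟨t', ht'⟩

end Progress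

section Simulation

variable {S T R R' : Type*} {stepS : S → S → Prop} {finalS : S → R → Prop}
  {stepT : T → T → Prop} {finalT : T → R' → Prop} {sim : S → T → Prop} {lt : S → S → Prop}

/-- The checkpoints of a target run: target states that are final or simulate a safe source state.
Final states are included because a source result is matched only after further target steps, in a
state that need not be related to any source state. -/
def Tracked (stepS : S → S → Prop) (finalS : S → R → Prop) (finalT : T → R' → Prop)
    (sim : S → T → Prop) (ς : T) : Prop :=
  (∃ r, finalT ς r) ∨ ∃ σ, sim σ ς ∧ Safe stepS finalS σ

theorem final_or_transGen_tracked_of_sim (hwf : WellFounded lt)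
    (hstep : ∀ σ1 ς1 σ2, sim σ1 ς1 → stepS σ1 σ2 →
      (∃ ς2, Relation.TransGen stepT ς1 ς2 ∧ sim σ2 ς2) ∨ (sim σ2 ς1 ∧ lt σ2 σ1))
    (hfinal : ∀ σ ς r, sim σ ς → finalS σ r →
      ∃ ς' r', Relation.ReflTransGen stepT ς ς' ∧ finalT ς' r')
    {σ : S} {ς : T} (hsim : sim σ ς) (hsafe : Safe stepS finalS σ) :
    (∃ r, finalT ς r) ∨
      ∃ ς', Relation.TransGen stepT ς ς' ∧ Tracked stepS finalS finalT sim ς' := by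
  induction σ using hwf.induction with
  | _ σ ih =>
    rcases hsafe.exists_step_or_final with ⟨σ', hσ⟩ | ⟨r, hr⟩
    · rcases hstep σ ς σ' hsim hσ with ⟨ς', hς, hsim'⟩ | ⟨hsim', hlt⟩
      · exact .inr ⟨ς', hς, .inr ⟨σ', hsim', hsafe.of_step hσ⟩⟩
      · exact ih σ' hlt hsim' (hsafe.of_step hσ)
    · obtain ⟨ς', r', hς, hr'⟩ := hfinal σ ς r hsim hr
      rcases Relation.reflTransGen_iff_eq_or_transGen.mp hς with rfl | hς
      · exact .inl ⟨r', hr'⟩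
      · exact .inr ⟨ς', hς, .inl ⟨r', hr'⟩⟩

theorem backward_safety_general (hdet : Relator.RightUnique stepT)
    (hstuck : ∀ ς r, finalT ς r → Stuck stepT ς) (hwf : WellFounded lt)
    (hstep : ∀ σ1 ς1 σ2, sim σ1 ς1 → stepS σ1 σ2 →
      (∃ ς2, Relation.TransGen stepT ς1 ς2 ∧ sim σ2 ς2) ∨ (sim σ2 ς1 ∧ lt σ2 σ1))
    (hfinal : ∀ σ ς r, sim σ ς → finalS σ r →
      ∃ ς' r', Relation.ReflTransGen stepT ς ς' ∧ finalT ς' r')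
    {σ : S} {ς : T} (hsim : sim σ ς) (hsafe : Safe stepS finalS σ) : Safe stepT finalT ς := by
  refine safe_of_forall_final_or_transGen hdet hstuck (P := Tracked stepS finalS finalT sim) ?_
    (.inr ⟨σ, hsim, hsafe⟩)
  rintro ς (hr | ⟨σ, hsim, hsafe⟩)
  · exact .inl hr
  · exact final_or_transGen_tracked_of_sim hwf hstep hfinal hsim hsafe

end Simulation

/-- the target state of a measured forward simulation from a
safe source state is safe (does not go wrong). -/
theorem backward_safety {S T R : Type*}
    (stepS : S → S → Prop) (finalS : S → R → Prop)
    (stepT : T → T → Prop) (finalT : T → R → Prop)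
    (hdetT : ∀ ς ς1 ς2, stepT ς ς1 → stepT ς ς2 → ς1 = ς2)
    (hfinalStuckT : ∀ ς r, finalT ς r → Stuck stepT ς)
    (hfinalDetT : ∀ ς r1 r2, finalT ς r1 → finalT ς r2 → r1 = r2)
    (sim : S → T → Prop) (lt : S → S → Prop) (hwf : WellFounded lt)
    (hstep : ∀ σ1 ς1 σ2, sim σ1 ς1 → stepS σ1 σ2 →
      (∃ ς2, Relation.TransGen stepT ς1 ς2 ∧ sim σ2 ς2) ∨
      (sim σ2 ς1 ∧ lt σ2 σ1))
    (hfinal : ∀ σ ς r, sim σ ς → finalS σ r →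
      ∃ ς', Relation.ReflTransGen stepT ς ς' ∧ finalT ς' r)
    (σ0 : S) (ς0 : T) (hsim : sim σ0 ς0) (hsafe : Safe stepS finalS σ0) :
    Safe stepT finalT ς0 := by
  exact backward_safety_general (fun ς ς1 ς2 => hdetT ς ς1 ς2) hfinalStuckT hwf hstep
    (fun σ ς r hs hr => (hfinal σ ς r hs hr).imp fun _ h => ⟨r, h⟩) hsim hsafe
end

section
/- Composition of compiler passes preserving refinement for safe programs. Let (S, stepS, finalS), (M, stepM, finalM), and (T, stepT, finalT) be three transition systems over the same result type R, with distinguished states σ0 : S, μ0 : M, τ0 : T. Suppose: (i) if σ0 is safe, then every behavior of μ0 is a behavior of σ0 (if μ0 terminates with r then σ0 terminates with r; if μ0 diverges then σ0 diverges; if μ0 goes wrong then σ0 goes wrong); and (ii) if μ0 is safe, then every behavior of τ0 is a behavior of μ0 (analogously). Then (classically) if σ0 is safe, every behavior of τ0 is a behavior of σ0. -/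
section Refinement

variable {S M T R : Type*}
  {stepS : S → S → Prop} {finalS : S → R → Prop}
  {stepM : M → M → Prop} {finalM : M → R → Prop}
  {stepT : T → T → Prop} {finalT : T → R → Prop}
  {s : S} {m : M} {t : T}

theorem safe_iff_not_goesWrong : Safe stepS finalS s ↔ ¬ GoesWrong stepS finalS s := by
  simp only [Safe, GoesWrong, Stuck, not_exists, not_and, not_forall, not_not,
    or_iff_not_imp_left]

/-- Behavioral refinement of `m` by `t`: every behavior of the target state `t` is a behavior of
the source state `m`. The target system comes first, and going wrong counts as a behavior to be
reflected rather than as a license for arbitrary target behavior. -/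
def Refines (stepT : T → T → Prop) (finalT : T → R → Prop) (t : T)
    (stepM : M → M → Prop) (finalM : M → R → Prop) (m : M) : Prop :=
  (∀ r, Terminates stepT finalT t r → Terminates stepM finalM m r) ∧
  (Diverges stepT t → Diverges stepM m) ∧
  (GoesWrong stepT finalT t → GoesWrong stepM finalM m)

theorem Refines.trans (htm : Refines stepT finalT t stepM finalM m)
    (hms : Refines stepM finalM m stepS finalS s) : Refines stepT finalT t stepS finalS s := by
  obtain ⟨terminates_tm, diverges_tm, goesWrong_tm⟩ := htm
  obtain ⟨terminates_ms, diverges_ms, goesWrong_ms⟩ := hms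
  exact ⟨fun r => terminates_ms r ∘ terminates_tm r, diverges_ms ∘ diverges_tm,
    goesWrong_ms ∘ goesWrong_tm⟩

theorem Refines.safe (hms : Refines stepM finalM m stepS finalS s) (hs : Safe stepS finalS s) :
    Safe stepM finalM m := by
  obtain ⟨-, -, goesWrong_ms⟩ := hms
  rw [safe_iff_not_goesWrong] at hs ⊢
  exact mt goesWrong_ms hs

end Refinement

/-- composition of compiler passes preserving refinement for
safe programs. -/
theorem refinement_composition {S M T R : Type*}
    (stepS : S → S → Prop) (finalS : S → R → Prop)
    (stepM : M → M → Prop) (finalM : M → R → Prop)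
    (stepT : T → T → Prop) (finalT : T → R → Prop)
    (σ0 : S) (μ0 : M) (τ0 : T)
    (h1 : Safe stepS finalS σ0 →
      (∀ r, Terminates stepM finalM μ0 r → Terminates stepS finalS σ0 r) ∧
      (Diverges stepM μ0 → Diverges stepS σ0) ∧
      (GoesWrong stepM finalM μ0 → GoesWrong stepS finalS σ0))
    (h2 : Safe stepM finalM μ0 →
      (∀ r, Terminates stepT finalT τ0 r → Terminates stepM finalM μ0 r) ∧
      (Diverges stepT τ0 → Diverges stepM μ0) ∧
      (GoesWrong stepT finalT τ0 → GoesWrong stepM finalM μ0)) :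
    Safe stepS finalS σ0 →
      (∀ r, Terminates stepT finalT τ0 r → Terminates stepS finalS σ0 r) ∧
      (Diverges stepT τ0 → Diverges stepS σ0) ∧
      (GoesWrong stepT finalT τ0 → GoesWrong stepS finalS σ0) := by
  intro hσ
  have hμσ : Refines stepM finalM μ0 stepS finalS σ0 := h1 hσ
  have hτμ : Refines stepT finalT τ0 stepM finalM μ0 := h2 (hμσ.safe hσ)
  exact hτμ.trans hμσ
end
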